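/- Let θ ∈ (0,π/2). There exists a constant D > 0, depending only on n and θ, such that for every θ-capillary convex body K with capillary entropy point z_e and for every z in the relative interior of K_f, one has ℰ_θ(K, z) ≤ ℰ_θ(K) − D·e^{−2ℰ_θ(K)}·|z − z_e|². -/

import Mathlib

open MeasureTheory Real Set Filter
open scoped RealInnerProductSpace

noncomputable section

/-- Ambient Euclidean space `ℝ^{n+1}`. -/
abbrev Amb (n : ℕ) : Type := EuclideanSpace ℝ (Fin (n + 1))

/-- The `(n+1)`-st standard basis vector `E_{n+1}`. -/
def lastBasis (n : ℕ) : Amb n := EuclideanSpace.single (Fin.last n) 1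

/-- The vector `e := -E_{n+1}`. -/
def eVec (n : ℕ) : Amb n := -(lastBasis n)

/-- The closed upper half-space `\overline{ℝ^{n+1}_+}`. -/
def upperHalf (n : ℕ) : Set (Amb n) := {x | 0 ≤ x (Fin.last n)}

/-- The boundary hyperplane `∂ℝ^{n+1}_+`. -/
def hyperplane (n : ℕ) : Set (Amb n) := {x | x (Fin.last n) = 0}

/-- `ℓ(x) := sin²θ + cos θ · ⟨x, e⟩`. -/
def ell (n : ℕ) (θ : ℝ) (x : Amb n) : ℝ := sin θ ^ 2 + cos θ * ⟪x, eVec n⟫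

/-- The unit spherical cap `C_θ`. -/
def capSphere (n : ℕ) (θ : ℝ) : Set (Amb n) :=
  {ξ | ξ ∈ upperHalf n ∧ ‖ξ - cos θ • eVec n‖ = 1}

/-- The unit spherical cap body `Ĉ_θ`. -/
def capBodyUnit (n : ℕ) (θ : ℝ) : Set (Amb n) :=
  {x | x ∈ upperHalf n ∧ ‖x - cos θ • eVec n‖ ≤ 1}

/-- A capillary convex body: a compact convex subset of the closed upper half-space with
nonempty interior, whose flat part `K_f` has nonempty interior relative to the boundary
hyperplane and whose curved boundary `K_u` is nonempty. -/
structure IsCapillaryBody (n : ℕ) (K : Set (Amb n)) : Prop where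
  compact : IsCompact K
  convex : Convex ℝ K
  subset_upper : K ⊆ upperHalf n
  interior_nonempty : (interior K).Nonempty
  flat_relint_nonempty : (intrinsicInterior ℝ (K ∩ hyperplane n)).Nonempty
  curved_nonempty : (frontier K ∩ {x | 0 < x (Fin.last n)}).Nonempty

/-- Normal cone (of unit normal vectors) of `K` at `x`. -/
def normalCone (n : ℕ) (K : Set (Amb n)) (x : Amb n) : Set (Amb n) :=
  {ζ | ‖ζ‖ = 1 ∧ ∀ y ∈ K, ⟪ζ, y - x⟫ ≤ 0}

/-- A `θ`-capillary convex body: a capillary convex body with contact angle at most `θ`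
along the relative boundary of its flat part. -/
def IsThetaCapillary (n : ℕ) (θ : ℝ) (K : Set (Amb n)) : Prop :=
  IsCapillaryBody n K ∧
    ∀ x ∈ intrinsicFrontier ℝ (K ∩ hyperplane n),
      cos θ ≤ sSup ((fun ζ => ⟪ζ, lastBasis n⟫) '' normalCone n K x)

/-- Support function `h_z(ξ) := max_{y ∈ K} ⟨ξ - cos θ · e, y - z⟩`. -/
def suppFn (n : ℕ) (θ : ℝ) (K : Set (Amb n)) (z ξ : Amb n) : ℝ :=
  sSup ((fun y => ⟪ξ - cos θ • eVec n, y - z⟫) '' K)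

/-- Capillary support function `u_z := h_z / ℓ`. -/
def capSupp (n : ℕ) (θ : ℝ) (K : Set (Amb n)) (z ξ : Amb n) : ℝ :=
  suppFn n θ K z ξ / ell n θ ξ

/-- Capillary polar body `K*_z`. -/
def capPolar (n : ℕ) (θ : ℝ) (K : Set (Amb n)) (z : Amb n) : Set (Amb n) :=
  {x | ∃ r : ℝ, 0 ≤ r ∧ ∃ ξ ∈ capSphere n θ, x = z + r • ξ ∧ r * capSupp n θ K z ξ ≤ 1}

/-- Capillary area `ω_θ := ∫_{C_θ} ℓ dσ` of `C_θ` (surface measure = `n`-dimensional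
Hausdorff measure). -/
def omegaTheta (n : ℕ) (θ : ℝ) : ℝ := ∫ ξ in capSphere n θ, ell n θ ξ ∂μH[(n : ℝ)]

/-- `ℰ_θ(K, z) := (1/ω_θ) ∫_{C_θ} log(u_z) ℓ dσ`. -/
def entropyAt (n : ℕ) (θ : ℝ) (K : Set (Amb n)) (z : Amb n) : ℝ :=
  (1 / omegaTheta n θ) *
    ∫ ξ in capSphere n θ, Real.log (capSupp n θ K z ξ) * ell n θ ξ ∂μH[(n : ℝ)]

/-- Capillary entropy `ℰ_θ(K)`: supremum of `ℰ_θ(K, z)` over `z` in the relative interior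
of the flat part `K_f`. -/
def capEntropy (n : ℕ) (θ : ℝ) (K : Set (Amb n)) : ℝ :=
  sSup (entropyAt n θ K '' intrinsicInterior ℝ (K ∩ hyperplane n))

/-- The spherical cap body `Ĉ_{r,θ}(x₀)`. -/
def capBodyAt (n : ℕ) (θ r : ℝ) (x₀ : Amb n) : Set (Amb n) :=
  {x | x ∈ upperHalf n ∧ ‖x - (x₀ + (r * cos θ) • eVec n)‖ ≤ r}

/-- Capillary inner radius `ρ₋(K, θ)`. -/
def capInRadius (n : ℕ) (θ : ℝ) (K : Set (Amb n)) : ℝ :=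
  sSup {r : ℝ | 0 < r ∧ ∃ x₀ ∈ hyperplane n, capBodyAt n θ r x₀ ⊆ K}

/-- Capillary outer radius `ρ₊(K, θ)`. -/
def capOutRadius (n : ℕ) (θ : ℝ) (K : Set (Amb n)) : ℝ :=
  sInf {r : ℝ | 0 < r ∧ ∃ x₀ ∈ hyperplane n, K ⊆ capBodyAt n θ r x₀}

/-- Classical inner radius `ρ₋(K)`. -/
def inRadius (n : ℕ) (K : Set (Amb n)) : ℝ :=
  sSup {ρ : ℝ | 0 < ρ ∧ ∃ x₀ ∈ hyperplane n, Metric.ball x₀ ρ ∩ upperHalf n ⊆ K}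

/-- Classical outer radius `ρ₊(K)`. -/
def outRadius (n : ℕ) (K : Set (Amb n)) : ℝ :=
  sInf {ρ : ℝ | 0 < ρ ∧ ∃ x₀ ∈ hyperplane n, K ⊆ Metric.ball x₀ ρ}

/-- Dual capillary gauge function `F_θ^∘`. -/
def Fdual (n : ℕ) (θ : ℝ) (x : Amb n) : ℝ :=
  (1 / sin θ) *
    (Real.sqrt (‖x‖ ^ 2 + (cos θ / sin θ) ^ 2 * ⟪eVec n, x⟫ ^ 2) -
      (cos θ / sin θ) * ⟪eVec n, x⟫)

/-- Capillary gauge function `F_θ(η) := |η| + cos θ · ⟨e, η⟩`. -/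
def Fgauge (n : ℕ) (θ : ℝ) (η : Amb n) : ℝ := ‖η‖ + cos θ * ⟪eVec n, η⟫

/-- Capillary Cahn–Hoffman map `Ψ(ξ) := (ξ - cos θ · e)/ℓ(ξ)`. -/
def cahnHoffman (n : ℕ) (θ : ℝ) (ξ : Amb n) : Amb n :=
  (ell n θ ξ)⁻¹ • (ξ - cos θ • eVec n)

/-- The ellipsoid portion `D_θ`. -/
def Dtheta (n : ℕ) (θ : ℝ) : Set (Amb n) :=
  {η | Fgauge n θ η = 1 ∧ cos θ / sin θ ^ 2 ≤ ⟪η, lastBasis n⟫}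

/-- Reflection across the boundary hyperplane `∂ℝ^{n+1}_+`. -/
def reflect (n : ℕ) (x : Amb n) : Amb n :=
  x - (2 * ⟪x, lastBasis n⟫) • lastBasis n

/-!
Let `ν = ω_θ⁻¹ ℓ dσ`, a probability measure on `C_θ`; then `ℰ_θ(K, z)` is the `ν`-mean of
`log u_z`. For horizontal `w - z`, the difference `u_z - u_w = ⟨ξ, w - z⟩ / ℓ` does not involve
`K`, and `u` at the midpoint `m` of `z` and `w` is `(u_z + u_w) / 2`. Strict concavity of `log`
at the midpoint, followed by Jensen's inequality for `exp`, gives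
`(ℰ_θ(K, z) + ℰ_θ(K, w)) / 2 + exp (2 (∫ log |u_z - u_w| dν - ℰ_θ(K, m))) / 8 ≤ ℰ_θ(K, m)`.
Since `ν` is invariant under rotations about the vertical axis, `∫ log |⟨ξ, v⟩ / ℓ| dν` equals
`log |v| + c(n, θ)` for horizontal `v ≠ 0`. Take `w = z_e` and bound `ℰ_θ(K, m) ≤ ℰ_θ(K)`.
-/

open scoped ENNReal NNReal Topology

section LogAverage

variable {Ω : Type*} {mΩ : MeasurableSpace Ω} {μ : Measure Ω}

lemma exp_integral_log_le_integral [IsProbabilityMeasure μ] {q : Ω → ℝ} (hq : ∀ᵐ ω ∂μ, 0 < q ω)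
    (hqi : Integrable q μ) (hlog : Integrable (fun ω ↦ log (q ω)) μ) :
    exp (∫ ω, log (q ω) ∂μ) ≤ ∫ ω, q ω ∂μ := by
  have hexp : (fun ω ↦ exp (log (q ω))) =ᵐ[μ] q := hq.mono fun ω hω ↦ exp_log hω
  calc exp (∫ ω, log (q ω) ∂μ) ≤ ∫ ω, exp (log (q ω)) ∂μ :=
        convexOn_exp.map_integral_le continuous_exp.continuousOn isClosed_univ
          (.of_forall fun _ ↦ mem_univ _) hlog (hqi.congr hexp.symm)
    _ = ∫ ω, q ω ∂μ := integral_congr_ae hexp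

lemma log_add_log_div_two_add_le_log_midpoint {x y : ℝ} (hx : 0 < x) (hy : 0 < y) :
    (log x + log y) / 2 + ((x - y) / ((x + y) / 2)) ^ 2 / 8 ≤ log ((x + y) / 2) := by
  have h := one_sub_inv_le_log_of_pos (x := ((x + y) / 2) ^ 2 / (x * y)) (by positivity)
  have hsq : 1 - (((x + y) / 2) ^ 2 / (x * y))⁻¹ = ((x - y) / ((x + y) / 2)) ^ 2 / 4 := by
    field_simp
    ring
  rw [hsq, log_div (by positivity) (by positivity), log_mul hx.ne' hy.ne', log_pow] at h
  push_cast at h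
  linarith

/- The deficit of `log` at the midpoint dominates the square of `(f - g) / ((f + g) / 2)`, whose
integral Jensen's inequality bounds below by the exponential of the integral of its logarithm. -/
lemma integral_log_add_exp_le_integral_log_midpoint [IsProbabilityMeasure μ] {f g : Ω → ℝ}
    (hf : ∀ᵐ ω ∂μ, 0 < f ω) (hg : ∀ᵐ ω ∂μ, 0 < g ω) (hfg : ∀ᵐ ω ∂μ, f ω ≠ g ω)
    (hlogf : Integrable (fun ω ↦ log (f ω)) μ) (hlogg : Integrable (fun ω ↦ log (g ω)) μ)
    (hlogmid : Integrable (fun ω ↦ log ((f ω + g ω) / 2)) μ)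
    (hlogsub : Integrable (fun ω ↦ log (f ω - g ω)) μ) :
    (∫ ω, log (f ω) ∂μ + ∫ ω, log (g ω) ∂μ) / 2 +
        exp (2 * (∫ ω, log (f ω - g ω) ∂μ - ∫ ω, log ((f ω + g ω) / 2) ∂μ)) / 8 ≤
      ∫ ω, log ((f ω + g ω) / 2) ∂μ := by
  set q : Ω → ℝ := fun ω ↦ ((f ω - g ω) / ((f ω + g ω) / 2)) ^ 2
  have hqpos : ∀ᵐ ω ∂μ, 0 < q ω := by
    filter_upwards [hf, hg, hfg] with ω hfω hgω hne
    have := sub_ne_zero.2 hne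
    positivity
  have hlogq : (fun ω ↦ 2 * (log (f ω - g ω) - log ((f ω + g ω) / 2))) =ᵐ[μ]
      fun ω ↦ log (q ω) := by
    filter_upwards [hf, hg, hfg] with ω hfω hgω hne
    rw [log_pow, log_div (sub_ne_zero.2 hne) (by positivity)]
    norm_cast
  have hlogqi : Integrable (fun ω ↦ log (q ω)) μ :=
    ((hlogsub.sub hlogmid).const_mul 2).congr hlogq
  have hlogmean : Integrable (fun ω ↦ (log (f ω) + log (g ω)) / 2) μ :=
    (hlogf.add hlogg).div_const 2
  have hdeficit :
      Integrable (fun ω ↦ 8 * (log ((f ω + g ω) / 2) - (log (f ω) + log (g ω)) / 2)) μ :=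
    (hlogmid.sub hlogmean).const_mul 8
  have hqle : q ≤ᵐ[μ] fun ω ↦ 8 * (log ((f ω + g ω) / 2) - (log (f ω) + log (g ω)) / 2) := by
    filter_upwards [hf, hg] with ω hfω hgω
    change ((f ω - g ω) / ((f ω + g ω) / 2)) ^ 2 ≤ _
    linarith [log_add_log_div_two_add_le_log_midpoint hfω hgω]
  have hqmeas : AEStronglyMeasurable q μ :=
    hlogqi.1.aemeasurable.exp.aestronglyMeasurable.congr (hqpos.mono fun ω hω ↦ exp_log hω)
  have hqi : Integrable q μ :=
    hdeficit.mono' hqmeas (hqle.mono fun ω hω ↦ by rwa [norm_of_nonneg (sq_nonneg _)])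
  have hjensen : exp (2 * (∫ ω, log (f ω - g ω) ∂μ - ∫ ω, log ((f ω + g ω) / 2) ∂μ)) ≤
      ∫ ω, q ω ∂μ := by
    rw [← integral_sub hlogsub hlogmid, ← integral_const_mul, integral_congr_ae hlogq]
    exact exp_integral_log_le_integral hqpos hqi hlogqi
  have hint := integral_mono_ae hqi hdeficit hqle
  rw [integral_const_mul, integral_sub hlogmid hlogmean,
    integral_div, integral_add hlogf hlogg] at hint
  linarith

end LogAverage

section IntrinsicInterior

variable {E : Type*} [NormedAddCommGroup E] [NormedSpace ℝ E] {S : Set E}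

lemma eventually_add_smul_mem_of_mem_intrinsicInterior {x y z : E}
    (hx : x ∈ intrinsicInterior ℝ S) (hy : y ∈ S) (hz : z ∈ S) :
    ∀ᶠ t in 𝓝 (0 : ℝ), x + t • (y - z) ∈ S := by
  obtain ⟨⟨x, hxspan⟩, hxint, rfl⟩ := mem_intrinsicInterior.1 hx
  have hmem (t : ℝ) : x + t • (y - z) ∈ affineSpan ℝ S := by
    rw [add_comm]
    exact (affineSpan ℝ S).smul_vsub_vadd_mem t (subset_affineSpan ℝ S hy)
      (subset_affineSpan ℝ S hz) hxspan
  have hcont : Continuous fun t : ℝ ↦ (⟨x + t • (y - z), hmem t⟩ : affineSpan ℝ S) := by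
    fun_prop
  have hzero : (⟨x + (0 : ℝ) • (y - z), hmem 0⟩ : affineSpan ℝ S) = ⟨x, hxspan⟩ := by simp
  have hnhds : ((↑) ⁻¹' S : Set (affineSpan ℝ S)) ∈ 𝓝 ⟨x + (0 : ℝ) • (y - z), hmem 0⟩ := by
    rw [hzero]
    exact mem_interior_iff_mem_nhds.1 hxint
  exact hcont.continuousAt.eventually hnhds

lemma exists_add_sub_smul_mem_of_mem_intrinsicInterior {x y z : E}
    (hx : x ∈ intrinsicInterior ℝ S) (hy : y ∈ S) (hz : z ∈ S) :
    ∃ ε : ℝ, 0 < ε ∧ x + ε • (y - z) ∈ S ∧ x - ε • (y - z) ∈ S := by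
  have hplus := eventually_add_smul_mem_of_mem_intrinsicInterior hx hy hz
  have hminus := eventually_add_smul_mem_of_mem_intrinsicInterior hx hz hy
  obtain ⟨ε, ⟨hεplus, hεminus⟩, hε⟩ :=
    (((hplus.and hminus).filter_mono nhdsWithin_le_nhds).and
      (self_mem_nhdsWithin : ∀ᶠ t in 𝓝[>] (0 : ℝ), t ∈ Ioi 0)).exists
  rw [← neg_sub y z, smul_neg, ← sub_eq_add_neg] at hεminus
  exact ⟨ε, hε, hεplus, hεminus⟩

lemma convex_intrinsicInterior (hS : Convex ℝ S) : Convex ℝ (intrinsicInterior ℝ S) := by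
  rcases S.eq_empty_or_nonempty with rfl | hne
  · simpa using convex_empty
  have : Nonempty (affineSpan ℝ S) := (hne.mono (subset_affineSpan ℝ S)).to_subtype
  let p : affineSpan ℝ S := Classical.arbitrary _
  let e := AffineIsometryEquiv.vaddConst ℝ p
  let φ : (affineSpan ℝ S).direction →ᵃ[ℝ] E :=
    (affineSpan ℝ S).subtype.comp e.toAffineEquiv.toAffineMap
  have hφ : φ '' interior (φ ⁻¹' S) = intrinsicInterior ℝ S :=
    image_interior_preimage_comp e e.toHomeomorph.isHomeomorph Subtype.val S
  rw [← hφ]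
  exact ((hS.affine_preimage φ).interior).affine_image φ

end IntrinsicInterior

section HausdorffImage

variable {X Y : Type*} [EMetricSpace X] [MeasurableSpace X] [BorelSpace X]
  [EMetricSpace Y] [MeasurableSpace Y] [BorelSpace Y]
  {f : X → Y} {s : Set X} {t : Set Y} {C : ℝ≥0} {d : ℝ}

lemma hausdorffMeasure_restrict_le_smul_map (hd : 0 ≤ d) (hf : LipschitzOnWith C f s)
    (hfm : Measurable f) (ht : t ⊆ f '' s) :
    (μH[d] : Measure Y).restrict t ≤ (C : ℝ≥0∞) ^ d • (μH[d].restrict s).map f := by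
  refine Measure.le_iff.2 fun A hA ↦ ?_
  rw [Measure.restrict_apply hA, Measure.smul_apply, Measure.map_apply hfm hA,
    Measure.restrict_apply (hfm hA), smul_eq_mul]
  have hsub : A ∩ t ⊆ f '' (f ⁻¹' A ∩ s) := by
    rw [image_preimage_inter]
    exact inter_subset_inter_right A ht
  exact (measure_mono hsub).trans ((hf.mono inter_subset_right).hausdorffMeasure_image_le hd)

lemma ae_restrict_hausdorffMeasure_of_comp (hd : 0 ≤ d) (hf : LipschitzOnWith C f s)
    (hfm : Measurable f) (ht : t ⊆ f '' s) {p : Y → Prop} (hp : MeasurableSet {y | p y})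
    (h : ∀ᵐ x ∂μH[d].restrict s, p (f x)) : ∀ᵐ y ∂μH[d].restrict t, p y :=
  ae_mono (hausdorffMeasure_restrict_le_smul_map hd hf hfm ht)
    (Measure.ae_smul_measure ((ae_map_iff hfm.aemeasurable hp).2 h) _)

lemma integrableOn_hausdorffMeasure_of_comp {F : Type*} [NormedAddCommGroup F] (hd : 0 ≤ d)
    (hf : LipschitzOnWith C f s) (hfm : Measurable f) (ht : t ⊆ f '' s) {g : Y → F}
    (hg : StronglyMeasurable g) (h : IntegrableOn (fun x ↦ g (f x)) s μH[d]) :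
    IntegrableOn g t μH[d] := by
  have hmap : Integrable g ((μH[d].restrict s).map f) :=
    (integrable_map_measure hg.aestronglyMeasurable hfm.aemeasurable).2 h
  exact (hmap.smul_measure (ENNReal.rpow_ne_top_of_nonneg hd ENNReal.coe_ne_top)).mono_measure
    (hausdorffMeasure_restrict_le_smul_map hd hf hfm ht)

end HausdorffImage

section Density

variable {X Y : Type*} [MeasurableSpace X] [MeasurableSpace Y] {μ : Measure X} {ν : Measure Y}

lemma measurePreserving_withDensity_comp {T : X → Y} (hT : MeasurePreserving T μ ν) {f : Y → ℝ≥0∞}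
    (hf : Measurable f) : MeasurePreserving T (μ.withDensity (f ∘ T)) (ν.withDensity f) := by
  refine ⟨hT.measurable, Measure.ext fun A hA ↦ ?_⟩
  rw [Measure.map_apply hT.measurable hA, withDensity_apply _ (hT.measurable hA),
    withDensity_apply _ hA]
  exact hT.setLIntegral_comp_preimage hA hf

end Density

section Cap

variable {n : ℕ} {θ : ℝ}

lemma inner_eVec (x : Amb n) : ⟪x, eVec n⟫ = -x (Fin.last n) := by
  simp [eVec, lastBasis, EuclideanSpace.inner_single_right]

lemma norm_sub_cos_smul_eVec_sq (ξ : Amb n) :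
    ‖ξ - cos θ • eVec n‖ ^ 2 = ∑ j : Fin n, ξ j.castSucc ^ 2 + (ξ (Fin.last n) + cos θ) ^ 2 := by
  simp [EuclideanSpace.norm_sq_eq, Fin.sum_univ_castSucc, eVec, lastBasis, Fin.castSucc_ne_last]

lemma mem_capSphere_iff {ξ : Amb n} : ξ ∈ capSphere n θ ↔
    0 ≤ ξ (Fin.last n) ∧ ∑ j : Fin n, ξ j.castSucc ^ 2 + (ξ (Fin.last n) + cos θ) ^ 2 = 1 := by
  rw [← norm_sub_cos_smul_eVec_sq, pow_eq_one_iff_of_nonneg (norm_nonneg _) two_ne_zero]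
  rfl

lemma isCompact_capSphere : IsCompact (capSphere n θ) := by
  have hcap : capSphere n θ = upperHalf n ∩ Metric.sphere (cos θ • eVec n) 1 := by
    ext ξ
    simp [capSphere]
  have hclosed : IsClosed (upperHalf n) := isClosed_le continuous_const (by fun_prop)
  rw [hcap]
  exact (isCompact_sphere _ _).inter_left hclosed

lemma one_add_cos_pos (hθ : θ ∈ Ioo 0 π) : 0 < 1 + cos θ := by
  have := cos_lt_cos_of_nonneg_of_le_pi hθ.1.le le_rfl hθ.2
  rw [cos_pi] at this
  linarith

lemma abs_cos_lt_one (hθ : θ ∈ Ioo 0 π) : |cos θ| < 1 := by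
  rw [← sq_lt_one_iff_abs_lt_one, ← sin_sq_add_cos_sq θ]
  have := sin_pos_of_mem_Ioo hθ
  linarith [pow_pos this 2]

/-- Inverse stereographic projection from the south pole of the unit sphere carrying the cap
`C_θ`, read in the coordinates in which that sphere is centred at `cos θ • e`. A single such chart
is Lipschitz on a box that covers the whole cap. -/
def capChart (n : ℕ) (θ : ℝ) (x : Fin n → ℝ) : Amb n :=
  WithLp.toLp 2 (Fin.snoc (fun j ↦ 2 * x j / (1 + ∑ k, x k ^ 2))
    ((1 - ∑ k, x k ^ 2) / (1 + ∑ k, x k ^ 2) - cos θ))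

@[simp]
lemma capChart_castSucc (x : Fin n → ℝ) (j : Fin n) :
    capChart n θ x j.castSucc = 2 * x j / (1 + ∑ k, x k ^ 2) := by
  simp [capChart]

@[simp]
lemma capChart_last (x : Fin n → ℝ) :
    capChart n θ x (Fin.last n) = (1 - ∑ k, x k ^ 2) / (1 + ∑ k, x k ^ 2) - cos θ := by
  simp [capChart]

lemma one_add_sum_sq_pos (x : Fin n → ℝ) : 0 < 1 + ∑ k, x k ^ 2 := by positivity

lemma contDiff_capChart : ContDiff ℝ 1 (capChart n θ) := by
  refine contDiff_euclidean.2 fun j ↦ ?_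
  have hne (x : Fin n → ℝ) : 1 + ∑ k, x k ^ 2 ≠ 0 := (one_add_sum_sq_pos x).ne'
  have hsum : ContDiff ℝ 1 fun x : Fin n → ℝ ↦ ∑ k, x k ^ 2 := by fun_prop
  induction j using Fin.lastCases with
  | last =>
    simp only [capChart_last]
    exact ((contDiff_const.sub hsum).div (contDiff_const.add hsum) hne).sub contDiff_const
  | cast j =>
    simp only [capChart_castSucc]
    exact (contDiff_const.mul (contDiff_apply ℝ ℝ j)).div (contDiff_const.add hsum) hne

lemma capSphere_subset_capChart_image (hθ : θ ∈ Ioo 0 π) :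
    capSphere n θ ⊆
      capChart n θ '' univ.pi fun _ ↦ Icc (-(1 + cos θ)⁻¹) (1 + cos θ)⁻¹ := by
  intro ξ hξ
  obtain ⟨hlast, hsq⟩ := mem_capSphere_iff.1 hξ
  have hcos := one_add_cos_pos hθ
  set t := ξ (Fin.last n) + cos θ
  have htpos : 0 < 1 + t := by linarith
  have hsum : ∑ k, (ξ (Fin.castSucc k) / (1 + t)) ^ 2 = (1 - t) / (1 + t) := by
    simp_rw [div_pow]
    rw [← Finset.sum_div, eq_sub_of_add_eq hsq]
    field_simp
    ring
  refine ⟨fun j ↦ ξ j.castSucc / (1 + t), fun j _ ↦ ?_, ?_⟩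
  · have hcoord : ξ j.castSucc ^ 2 ≤ 1 := by
      have := Finset.single_le_sum (f := fun j : Fin n ↦ ξ j.castSucc ^ 2)
        (fun _ _ ↦ sq_nonneg _) (Finset.mem_univ j)
      nlinarith [sq_nonneg t]
    rw [mem_Icc, ← abs_le, abs_div, abs_of_pos htpos, ← one_div]
    exact div_le_div₀ zero_le_one ((sq_le_one_iff_abs_le_one _).1 hcoord) hcos (by linarith)
  · ext j
    induction j using Fin.lastCases with
    | last =>
      rw [capChart_last, hsum]
      field_simp
      linarith
    | cast j =>
      rw [capChart_castSucc, hsum]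
      field_simp
      ring

lemma exists_lipschitzOnWith_capChart_box (r : ℝ) :
    ∃ C, LipschitzOnWith C (capChart n θ) (univ.pi fun _ ↦ Icc (-r) r) :=
  contDiff_capChart.locallyLipschitz.locallyLipschitzOn.exists_lipschitzOnWith_of_compact
    (isCompact_univ_pi fun _ ↦ isCompact_Icc)

lemma hausdorffMeasure_pi_fin_real : (μH[(n : ℝ)] : Measure (Fin n → ℝ)) = volume := by
  simpa using hausdorffMeasure_pi_real (ι := Fin n)

lemma hausdorffMeasure_capSphere_lt_top (hθ : θ ∈ Ioo 0 π) :
    μH[(n : ℝ)] (capSphere n θ) < ∞ := by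
  obtain ⟨C, hC⟩ := exists_lipschitzOnWith_capChart_box (n := n) (θ := θ) (1 + cos θ)⁻¹
  have hbox := (isCompact_univ_pi fun _ : Fin n ↦
    isCompact_Icc (a := -(1 + cos θ)⁻¹) (b := (1 + cos θ)⁻¹)).measure_lt_top (μ := volume)
  rw [← hausdorffMeasure_pi_fin_real] at hbox
  calc μH[(n : ℝ)] (capSphere n θ)
      ≤ μH[(n : ℝ)] (capChart n θ '' univ.pi fun _ ↦ Icc (-(1 + cos θ)⁻¹) (1 + cos θ)⁻¹) :=
        measure_mono (capSphere_subset_capChart_image hθ)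
    _ ≤ (C : ℝ≥0∞) ^ (n : ℝ) * μH[(n : ℝ)] (univ.pi fun _ ↦ Icc (-(1 + cos θ)⁻¹) (1 + cos θ)⁻¹) :=
        hC.hausdorffMeasure_image_le n.cast_nonneg
    _ < ∞ :=
        ENNReal.mul_lt_top (ENNReal.rpow_lt_top_of_nonneg n.cast_nonneg ENNReal.coe_ne_top) hbox

lemma subset_image_castSucc_capSphere :
    {x : Fin n → ℝ | ∑ j, x j ^ 2 < sin θ ^ 2} ⊆
      (fun (ξ : Amb n) j ↦ ξ (Fin.castSucc j)) '' capSphere n θ := by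
  intro x (hx : ∑ j, x j ^ 2 < sin θ ^ 2)
  have hheight : cos θ ≤ √(1 - ∑ j, x j ^ 2) := by
    apply le_sqrt_of_sq_le
    linarith [sin_sq_add_cos_sq θ]
  have hnonneg : 0 ≤ 1 - ∑ j, x j ^ 2 := by
    linarith [sin_sq_le_one θ]
  refine ⟨WithLp.toLp 2 (Fin.snoc x (√(1 - ∑ j, x j ^ 2) - cos θ)), mem_capSphere_iff.2 ?_, ?_⟩
  · simp [sq_sqrt hnonneg, hheight]
  · simp

lemma hausdorffMeasure_capSphere_pos (hθ : θ ∈ Ioo 0 π) : 0 < μH[(n : ℝ)] (capSphere n θ) := by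
  have hlip : LipschitzWith 1 fun (ξ : Amb n) (j : Fin n) ↦ ξ (Fin.castSucc j) :=
    LipschitzWith.of_dist_le_mul fun ξ η ↦ by
      rw [NNReal.coe_one, one_mul, dist_pi_le_iff dist_nonneg]
      exact fun j ↦ by simpa [dist_eq_norm] using PiLp.norm_apply_le (ξ - η) (Fin.castSucc j)
  have hopen : IsOpen {x : Fin n → ℝ | ∑ j, x j ^ 2 < sin θ ^ 2} :=
    isOpen_lt (by fun_prop) continuous_const
  have hzero : (0 : Fin n → ℝ) ∈ {x : Fin n → ℝ | ∑ j, x j ^ 2 < sin θ ^ 2} := by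
    simpa using pow_pos (sin_pos_of_mem_Ioo hθ) 2
  calc 0 < volume {x : Fin n → ℝ | ∑ j, x j ^ 2 < sin θ ^ 2} := hopen.measure_pos _ ⟨0, hzero⟩
    _ ≤ μH[(n : ℝ)] ((fun (ξ : Amb n) j ↦ ξ (Fin.castSucc j)) '' capSphere n θ) := by
        rw [hausdorffMeasure_pi_fin_real]
        exact measure_mono subset_image_castSucc_capSphere
    _ ≤ (1 : ℝ≥0∞) ^ (n : ℝ) * μH[(n : ℝ)] (capSphere n θ) :=
        hlip.hausdorffMeasure_image_le n.cast_nonneg _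
    _ = μH[(n : ℝ)] (capSphere n θ) := by simp

lemma ae_capSphere_apply_castSucc_ne_zero (hθ : θ ∈ Ioo 0 π) (i : Fin n) :
    ∀ᵐ ξ ∂μH[(n : ℝ)].restrict (capSphere n θ), ξ i.castSucc ≠ 0 := by
  obtain ⟨C, hC⟩ := exists_lipschitzOnWith_capChart_box (n := n) (θ := θ) (1 + cos θ)⁻¹
  refine ae_restrict_hausdorffMeasure_of_comp n.cast_nonneg hC
    contDiff_capChart.continuous.measurable (capSphere_subset_capChart_image hθ)
    (measurableSet_eq_fun (by fun_prop) measurable_const).compl ?_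
  rw [hausdorffMeasure_pi_fin_real]
  filter_upwards [ae_restrict_of_ae (Measure.ae_eval_ne (fun _ ↦ volume) i 0)] with x hx
  rw [capChart_castSucc]
  exact div_ne_zero (mul_ne_zero two_ne_zero hx) (one_add_sum_sq_pos x).ne'

lemma integrableOn_log_apply_capSphere (hθ : θ ∈ Ioo 0 π) (i : Fin n) :
    IntegrableOn (fun ξ : Amb n ↦ log (ξ i.castSucc)) (capSphere n θ) μH[(n : ℝ)] := by
  obtain ⟨C, hC⟩ := exists_lipschitzOnWith_capChart_box (n := n) (θ := θ) (1 + cos θ)⁻¹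
  refine integrableOn_hausdorffMeasure_of_comp n.cast_nonneg hC
    contDiff_capChart.continuous.measurable (capSphere_subset_capChart_image hθ)
    (Measurable.stronglyMeasurable (by fun_prop)) ?_
  rw [hausdorffMeasure_pi_fin_real]
  have hcoord : IntegrableOn (fun x : Fin n → ℝ ↦ log (x i))
      (univ.pi fun _ ↦ Icc (-(1 + cos θ)⁻¹) (1 + cos θ)⁻¹) := by
    rw [IntegrableOn, volume_pi, Measure.restrict_pi_pi]
    refine integrable_comp_eval (X := fun _ : Fin n ↦ ℝ) (f := log) ?_
    have hR : -(1 + cos θ)⁻¹ ≤ (1 + cos θ)⁻¹ :=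
      neg_le_self (inv_nonneg.2 (one_add_cos_pos hθ).le)
    exact (intervalIntegrable_iff_integrableOn_Icc_of_le hR).1
      intervalIntegral.intervalIntegrable_log'
  have hfactor : Continuous fun x : Fin n → ℝ ↦ log (2 / (1 + ∑ k, x k ^ 2)) :=
    (continuous_const.div (by fun_prop) fun x ↦ (one_add_sum_sq_pos x).ne').log
      fun x ↦ (div_pos two_pos (one_add_sum_sq_pos x)).ne'
  refine (hcoord.add (hfactor.continuousOn.integrableOn_compact
    (isCompact_univ_pi fun _ ↦ isCompact_Icc))).congr ?_
  filter_upwards [ae_restrict_of_ae (Measure.ae_eval_ne (fun _ ↦ volume) i 0)] with x hx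
  rw [capChart_castSucc, mul_comm 2, mul_div_assoc,
    log_mul hx (div_pos two_pos (one_add_sum_sq_pos x)).ne']
  rfl

lemma ell_eq_one_add_inner (ξ : Amb n) :
    ell n θ ξ = 1 + ⟪ξ - cos θ • eVec n, cos θ • eVec n⟫ := by
  have hnorm : ⟪eVec n, eVec n⟫ = 1 := by simp [eVec, lastBasis]
  rw [ell, inner_sub_left, real_inner_smul_left, real_inner_smul_right, real_inner_smul_right,
    hnorm, sin_sq]
  ring

@[fun_prop]
lemma continuous_ell : Continuous (ell n θ) := by
  unfold ell
  fun_prop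

lemma one_sub_abs_cos_le_ell {ξ : Amb n} (hξ : ξ ∈ capSphere n θ) : 1 - |cos θ| ≤ ell n θ ξ := by
  have he : ‖eVec n‖ = 1 := by simp [eVec, lastBasis]
  have h := abs_real_inner_le_norm (ξ - cos θ • eVec n) (cos θ • eVec n)
  rw [hξ.2, norm_smul, he, one_mul, mul_one, norm_eq_abs] at h
  rw [ell_eq_one_add_inner]
  linarith [neg_le_of_abs_le h]

lemma ell_pos (hθ : θ ∈ Ioo 0 π) {ξ : Amb n} (hξ : ξ ∈ capSphere n θ) : 0 < ell n θ ξ :=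
  (sub_pos.2 (abs_cos_lt_one hθ)).trans_le (one_sub_abs_cos_le_ell hξ)

lemma integrableOn_capSphere_of_continuousOn (hθ : θ ∈ Ioo 0 π) {f : Amb n → ℝ}
    (hf : ContinuousOn f (capSphere n θ)) : IntegrableOn f (capSphere n θ) μH[(n : ℝ)] :=
  hf.integrableOn_of_subset_isCompact isCompact_capSphere isCompact_capSphere.measurableSet
    Subset.rfl (hausdorffMeasure_capSphere_lt_top hθ).ne

lemma omegaTheta_pos (hθ : θ ∈ Ioo 0 π) : 0 < omegaTheta n θ := by
  have hmass : 0 < μH[(n : ℝ)].real (capSphere n θ) :=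
    ENNReal.toReal_pos (hausdorffMeasure_capSphere_pos hθ).ne'
      (hausdorffMeasure_capSphere_lt_top hθ).ne
  exact (mul_pos (sub_pos.2 (abs_cos_lt_one hθ)) hmass).trans_le
    (setIntegral_ge_of_const_le_real isCompact_capSphere.measurableSet
      (hausdorffMeasure_capSphere_lt_top hθ).ne (fun _ ↦ one_sub_abs_cos_le_ell)
      (integrableOn_capSphere_of_continuousOn hθ continuous_ell.continuousOn))

/-- The probability measure `ω_θ⁻¹ ℓ dσ` on the cap `C_θ`, with respect to which `ℰ_θ(K, z)` is
the mean of `log u_z`. -/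
def capProb (n : ℕ) (θ : ℝ) : Measure (Amb n) :=
  (μH[(n : ℝ)].restrict (capSphere n θ)).withDensity
    fun ξ ↦ ENNReal.ofReal (ell n θ ξ / omegaTheta n θ)

lemma isProbabilityMeasure_capProb (hθ : θ ∈ Ioo 0 π) : IsProbabilityMeasure (capProb n θ) := by
  have hnonneg : ∀ᵐ ξ ∂μH[(n : ℝ)].restrict (capSphere n θ), 0 ≤ ell n θ ξ / omegaTheta n θ :=
    ae_restrict_of_forall_mem isCompact_capSphere.measurableSet fun _ hξ ↦
      (div_pos (ell_pos hθ hξ) (omegaTheta_pos hθ)).le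
  have hint := integrableOn_capSphere_of_continuousOn (n := n) hθ
    (continuous_ell (θ := θ) |>.div_const (omegaTheta n θ)).continuousOn
  refine ⟨?_⟩
  rw [capProb, withDensity_apply _ MeasurableSet.univ, Measure.restrict_univ,
    ← ofReal_integral_eq_lintegral_ofReal hint hnonneg, integral_div]
  change ENNReal.ofReal (omegaTheta n θ / omegaTheta n θ) = 1
  rw [div_self (omegaTheta_pos hθ).ne', ENNReal.ofReal_one]

lemma ae_capProb_of_ae_capSphere {p : Amb n → Prop}
    (h : ∀ᵐ ξ ∂μH[(n : ℝ)].restrict (capSphere n θ), p ξ) : ∀ᵐ ξ ∂capProb n θ, p ξ :=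
  (withDensity_absolutelyContinuous _ _).ae_le h

lemma ae_mem_capSphere : ∀ᵐ ξ ∂capProb n θ, ξ ∈ capSphere n θ :=
  ae_capProb_of_ae_capSphere (ae_restrict_mem isCompact_capSphere.measurableSet)

lemma integrable_capProb_of_integrableOn {f : Amb n → ℝ}
    (hf : IntegrableOn f (capSphere n θ) μH[(n : ℝ)]) : Integrable f (capProb n θ) := by
  refine (integrable_withDensity_iff_integrable_smul' (by fun_prop)
    (.of_forall fun _ ↦ ENNReal.ofReal_lt_top)).2 ?_
  simp only [ENNReal.toReal_ofReal']
  exact hf.continuousOn_smul (by fun_prop) isCompact_capSphere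

lemma entropyAt_eq_integral_capProb (hθ : θ ∈ Ioo 0 π) (K : Set (Amb n)) (z : Amb n) :
    entropyAt n θ K z = ∫ ξ, log (capSupp n θ K z ξ) ∂capProb n θ := by
  rw [entropyAt, capProb, integral_withDensity_eq_integral_toReal_smul (by fun_prop)
    (.of_forall fun _ ↦ ENNReal.ofReal_lt_top), ← integral_const_mul]
  refine setIntegral_congr_fun isCompact_capSphere.measurableSet fun ξ hξ ↦ ?_
  rw [ENNReal.toReal_ofReal (div_pos (ell_pos hθ hξ) (omegaTheta_pos hθ)).le, smul_eq_mul]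
  ring

lemma measurePreserving_capProb {R : Amb n ≃ₗᵢ[ℝ] Amb n} (hR : R (eVec n) = eVec n) :
    MeasurePreserving R (capProb n θ) (capProb n θ) := by
  have hinner (ξ : Amb n) : ⟪R ξ, eVec n⟫ = ⟪ξ, eVec n⟫ := by
    conv_lhs => rw [← hR, R.inner_map_map]
  have hcap : R ⁻¹' capSphere n θ = capSphere n θ := by
    ext ξ
    have hlast : R ξ (Fin.last n) = ξ (Fin.last n) := by simpa [inner_eVec] using hinner ξ
    have hnorm : ‖R ξ - cos θ • eVec n‖ = ‖ξ - cos θ • eVec n‖ := by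
      conv_lhs => rw [← hR, ← map_smul, ← map_sub, R.norm_map]
    simp only [capSphere, upperHalf, mem_preimage, mem_ofPred_eq, hlast, hnorm]
  have hcapmp := (R.toIsometryEquiv.measurePreserving_hausdorffMeasure (n : ℝ)).restrict_preimage
    (isCompact_capSphere (n := n) (θ := θ)).measurableSet
  have hell := measurePreserving_withDensity_comp hcapmp
    (f := fun ξ ↦ ENNReal.ofReal (ell n θ ξ / omegaTheta n θ)) (by fun_prop)
  simpa [capProb, Function.comp_def, ell, hinner, hcap] using hell

lemma exists_linearIsometryEquiv_inner_eq [NeZero n] {v : Amb n} (hv : v ∈ hyperplane n) :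
    ∃ R : Amb n ≃ₗᵢ[ℝ] Amb n, R (eVec n) = eVec n ∧ ∀ ξ, ⟪ξ, v⟫ = ‖v‖ * R ξ 0 := by
  set w : Amb n := EuclideanSpace.single 0 ‖v‖ with hw
  have hwv : ‖v‖ = ‖w‖ := by simp [hw]
  have hperp : eVec n ∈ (ℝ ∙ (v - w))ᗮ := by
    rw [Submodule.mem_orthogonal_singleton_iff_inner_right, inner_eVec]
    have hv0 : v (Fin.last n) = 0 := hv
    simp [hw, hv0, Fin.last_eq_zero_iff, NeZero.ne n]
  refine ⟨(ℝ ∙ (v - w))ᗮ.reflection, Submodule.reflection_mem_subspace_eq_self hperp, fun ξ ↦ ?_⟩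
  rw [← ((ℝ ∙ (v - w))ᗮ.reflection).inner_map_map ξ v, Submodule.reflection_sub hwv, hw,
    EuclideanSpace.inner_single_right]
  simp

/-- The constant `c(n, θ)` such that `log (⟨ξ, v⟩ / ℓ(ξ))` has `capProb`-mean `log ‖v‖ + c(n, θ)`
for every nonzero horizontal `v`. Recall that `Real.log` is `log |·|`. -/
def capLogMean (n : ℕ) (θ : ℝ) : ℝ := ∫ ξ : Amb n, log (ξ 0 / ell n θ ξ) ∂capProb n θ

section HorizontalVector

variable [NeZero n] {v : Amb n}

lemma ae_capProb_apply_zero_ne_zero (hθ : θ ∈ Ioo 0 π) : ∀ᵐ ξ ∂capProb n θ, ξ 0 ≠ 0 :=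
  ae_capProb_of_ae_capSphere (by simpa using ae_capSphere_apply_castSucc_ne_zero hθ (0 : Fin n))

lemma integrable_log_apply_zero_div_ell (hθ : θ ∈ Ioo 0 π) :
    Integrable (fun ξ : Amb n ↦ log (ξ 0 / ell n θ ξ)) (capProb n θ) := by
  have hcoord : Integrable (fun ξ : Amb n ↦ log (ξ 0)) (capProb n θ) :=
    integrable_capProb_of_integrableOn
      (by simpa using integrableOn_log_apply_capSphere hθ (0 : Fin n))
  have hell : Integrable (fun ξ : Amb n ↦ log (ell n θ ξ)) (capProb n θ) :=
    integrable_capProb_of_integrableOn (integrableOn_capSphere_of_continuousOn hθ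
      (continuous_ell.continuousOn.log fun _ hξ ↦ (ell_pos hθ hξ).ne'))
  refine (hcoord.sub hell).congr ?_
  filter_upwards [ae_capProb_apply_zero_ne_zero hθ, ae_mem_capSphere] with ξ hξ0 hξ
  exact (log_div hξ0 (ell_pos hθ hξ).ne').symm

lemma ae_capProb_inner_ne_zero (hθ : θ ∈ Ioo 0 π) (hv : v ∈ hyperplane n) (hv0 : v ≠ 0) :
    ∀ᵐ ξ ∂capProb n θ, ⟪ξ, v⟫ ≠ 0 := by
  obtain ⟨R, hRe, hRv⟩ := exists_linearIsometryEquiv_inner_eq hv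
  filter_upwards [(measurePreserving_capProb hRe).quasiMeasurePreserving.ae
    (ae_capProb_apply_zero_ne_zero hθ)] with ξ hξ
  rw [hRv]
  exact mul_ne_zero (norm_ne_zero_iff.2 hv0) hξ

lemma exists_measurePreserving_log_inner_div_ell (hθ : θ ∈ Ioo 0 π) (hv : v ∈ hyperplane n)
    (hv0 : v ≠ 0) : ∃ R : Amb n ≃ₗᵢ[ℝ] Amb n, MeasurePreserving R (capProb n θ) (capProb n θ) ∧
      (fun ξ ↦ log (⟪ξ, v⟫ / ell n θ ξ)) =ᵐ[capProb n θ]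
        fun ξ ↦ log ‖v‖ + log (R ξ 0 / ell n θ (R ξ)) := by
  obtain ⟨R, hRe, hRv⟩ := exists_linearIsometryEquiv_inner_eq hv
  refine ⟨R, measurePreserving_capProb hRe, ?_⟩
  filter_upwards [ae_capProb_inner_ne_zero hθ hv hv0, ae_mem_capSphere] with ξ hξ0 hξ
  have hell : ell n θ (R ξ) = ell n θ ξ := by
    rw [ell, ell, ← hRe, R.inner_map_map, hRe]
  rw [hRv] at hξ0
  rw [hell, hRv, mul_div_assoc, log_mul (left_ne_zero_of_mul hξ0)
    (div_ne_zero (right_ne_zero_of_mul hξ0) (ell_pos hθ hξ).ne')]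

lemma integrable_log_inner_div_ell (hθ : θ ∈ Ioo 0 π) (hv : v ∈ hyperplane n) (hv0 : v ≠ 0) :
    Integrable (fun ξ ↦ log (⟪ξ, v⟫ / ell n θ ξ)) (capProb n θ) := by
  have := isProbabilityMeasure_capProb (n := n) hθ
  obtain ⟨R, hR, hlog⟩ := exists_measurePreserving_log_inner_div_ell hθ hv hv0
  exact ((integrable_const _).add
    (hR.integrable_comp_of_integrable (integrable_log_apply_zero_div_ell hθ))).congr hlog.symm

lemma integral_log_inner_div_ell (hθ : θ ∈ Ioo 0 π) (hv : v ∈ hyperplane n) (hv0 : v ≠ 0) :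
    ∫ ξ, log (⟪ξ, v⟫ / ell n θ ξ) ∂capProb n θ = log ‖v‖ + capLogMean n θ := by
  have := isProbabilityMeasure_capProb (n := n) hθ
  obtain ⟨R, hR, hlog⟩ := exists_measurePreserving_log_inner_div_ell hθ hv hv0
  have hint := hR.integrable_comp_of_integrable (integrable_log_apply_zero_div_ell hθ)
  simp only [Function.comp_def] at hint
  have hcomp := hR.integral_comp R.toHomeomorph.measurableEmbedding
    fun ξ ↦ log (ξ 0 / ell n θ ξ)
  rw [capLogMean, ← hcomp, integral_congr_ae hlog, integral_add (integrable_const _) hint,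
    integral_const, probReal_univ, one_smul]

end HorizontalVector

/-- The boundary hyperplane as a linear subspace. -/
def hyperplaneSubmodule (n : ℕ) : Submodule ℝ (Amb n) where
  carrier := hyperplane n
  add_mem' {x y} (hx : x (Fin.last n) = 0) (hy : y (Fin.last n) = 0) := by simp [hyperplane, hx, hy]
  zero_mem' := by simp [hyperplane]
  smul_mem' c x (hx : x (Fin.last n) = 0) := by simp [hyperplane, hx]

section SupportFunction

variable {K : Set (Amb n)} {x y z v ξ : Amb n}

lemma bddAbove_inner_image (hK : IsCompact K) (z ξ : Amb n) :
    BddAbove ((fun y ↦ ⟪ξ - cos θ • eVec n, y - z⟫) '' K) :=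
  hK.bddAbove_image (by fun_prop)

lemma inner_le_suppFn (hK : IsCompact K) (hy : y ∈ K) (z ξ : Amb n) :
    ⟪ξ - cos θ • eVec n, y - z⟫ ≤ suppFn n θ K z ξ :=
  le_csSup (bddAbove_inner_image hK z ξ) (mem_image_of_mem _ hy)

lemma suppFn_eq_add_inner (hK : IsCompact K) (hne : K.Nonempty) (z z' ξ : Amb n) :
    suppFn n θ K z ξ = suppFn n θ K z' ξ + ⟪ξ - cos θ • eVec n, z' - z⟫ := by
  have hsup := (OrderIso.addRight ⟪ξ - cos θ • eVec n, z' - z⟫).map_csSup'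
    (hne.image fun y ↦ ⟪ξ - cos θ • eVec n, y - z'⟫) (bddAbove_inner_image hK z' ξ)
  rw [image_image] at hsup
  simpa only [suppFn, OrderIso.addRight_apply, ← inner_add_right, sub_add_sub_cancel]
    using hsup.symm

lemma suppFn_midpoint (hK : IsCompact K) (hne : K.Nonempty) (z w ξ : Amb n) :
    suppFn n θ K (midpoint ℝ z w) ξ = (suppFn n θ K z ξ + suppFn n θ K w ξ) / 2 := by
  have hcancel : midpoint ℝ z w - w = -(midpoint ℝ z w - z) := by
    rw [midpoint_sub_left, midpoint_sub_right, ← smul_neg, neg_sub]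
  rw [suppFn_eq_add_inner hK hne z (midpoint ℝ z w), suppFn_eq_add_inner hK hne w (midpoint ℝ z w),
    hcancel, inner_neg_right]
  ring

lemma capSupp_midpoint (hK : IsCompact K) (hne : K.Nonempty) (z w ξ : Amb n) :
    capSupp n θ K (midpoint ℝ z w) ξ = (capSupp n θ K z ξ + capSupp n θ K w ξ) / 2 := by
  rw [capSupp, suppFn_midpoint hK hne, capSupp, capSupp]
  ring

lemma inner_sub_smul_eVec_of_mem_hyperplane (hv : v ∈ hyperplane n) (c : ℝ) (ξ : Amb n) :
    ⟪ξ - c • eVec n, v⟫ = ⟪ξ, v⟫ := by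
  have hv0 : v (Fin.last n) = 0 := hv
  rw [inner_sub_left, real_inner_smul_left, real_inner_comm v (eVec n), inner_eVec, hv0, neg_zero,
    mul_zero, sub_zero]

lemma capSupp_eq_add_inner_div_ell (hK : IsCompact K) (hne : K.Nonempty) {z z' : Amb n}
    (h : z' - z ∈ hyperplane n) (ξ : Amb n) :
    capSupp n θ K z ξ = capSupp n θ K z' ξ + ⟪ξ, z' - z⟫ / ell n θ ξ := by
  rw [capSupp, capSupp, suppFn_eq_add_inner hK hne z z',
    inner_sub_smul_eVec_of_mem_hyperplane h, add_div]

lemma continuousOn_capSupp (hθ : θ ∈ Ioo 0 π) (hK : IsCompact K) (z : Amb n) :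
    ContinuousOn (capSupp n θ K z) (capSphere n θ) := by
  have hsupp : Continuous (suppFn n θ K z) := hK.continuous_sSup (by fun_prop)
  exact hsupp.continuousOn.div continuous_ell.continuousOn fun ξ hξ ↦ (ell_pos hθ hξ).ne'

lemma suppFn_le_diam (hK : IsCompact K) (hz : z ∈ K) (hξ : ξ ∈ capSphere n θ) :
    suppFn n θ K z ξ ≤ Metric.diam K := by
  refine csSup_le ((nonempty_of_mem hz).image _) (forall_mem_image.2 fun y hy ↦ ?_)
  calc ⟪ξ - cos θ • eVec n, y - z⟫ ≤ ‖ξ - cos θ • eVec n‖ * ‖y - z‖ := real_inner_le_norm _ _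
    _ = dist y z := by rw [hξ.2, one_mul, dist_eq_norm]
    _ ≤ Metric.diam K := Metric.dist_le_diam_of_mem hK.isBounded hy hz

lemma abs_inner_div_ell_le_capSupp (hθ : θ ∈ Ioo 0 π) (hK : IsCompact K)
    (hv : v ∈ hyperplane n) (hadd : x + v ∈ K) (hsub : x - v ∈ K) (hξ : ξ ∈ capSphere n θ) :
    |⟪ξ, v⟫ / ell n θ ξ| ≤ capSupp n θ K x ξ := by
  rw [abs_div, abs_of_pos (ell_pos hθ hξ), capSupp]
  gcongr
  · exact (ell_pos hθ hξ).le
  refine abs_le'.2 ⟨?_, ?_⟩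
  · simpa [inner_sub_smul_eVec_of_mem_hyperplane hv] using inner_le_suppFn (θ := θ) hK hadd x ξ
  · simpa [inner_sub_smul_eVec_of_mem_hyperplane hv] using inner_le_suppFn (θ := θ) hK hsub x ξ

end SupportFunction

section Entropy

variable {K : Set (Amb n)} {x z w : Amb n}

lemma convex_flat_intrinsicInterior (hK : Convex ℝ K) :
    Convex ℝ (intrinsicInterior ℝ (K ∩ hyperplane n)) :=
  convex_intrinsicInterior (hK.inter (hyperplaneSubmodule n).convex)

lemma exists_horizontal_add_sub_mem (hflat : (K ∩ hyperplane n).Nontrivial)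
    (hx : x ∈ intrinsicInterior ℝ (K ∩ hyperplane n)) :
    ∃ v ∈ hyperplane n, v ≠ 0 ∧ x + v ∈ K ∧ x - v ∈ K := by
  obtain ⟨y, hy, z, hz, hyz⟩ := hflat
  obtain ⟨ε, hε, hadd, hsub⟩ := exists_add_sub_smul_mem_of_mem_intrinsicInterior hx hy hz
  have hdir : y - z ∈ hyperplane n := (hyperplaneSubmodule n).sub_mem hy.2 hz.2
  exact ⟨ε • (y - z), (hyperplaneSubmodule n).smul_mem ε hdir,
    smul_ne_zero hε.ne' (sub_ne_zero.2 hyz), hadd.1, hsub.1⟩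

lemma integrable_capSupp (hθ : θ ∈ Ioo 0 π) (hK : IsCompact K) (z : Amb n) :
    Integrable (capSupp n θ K z) (capProb n θ) :=
  integrable_capProb_of_integrableOn
    (integrableOn_capSphere_of_continuousOn hθ (continuousOn_capSupp hθ hK z))

variable [NeZero n]

lemma ae_capSupp_pos (hθ : θ ∈ Ioo 0 π) (hK : IsCompact K)
    (hflat : (K ∩ hyperplane n).Nontrivial)
    (hx : x ∈ intrinsicInterior ℝ (K ∩ hyperplane n)) :
    ∀ᵐ ξ ∂capProb n θ, 0 < capSupp n θ K x ξ := by
  obtain ⟨v, hv, hv0, hadd, hsub⟩ := exists_horizontal_add_sub_mem hflat hx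
  filter_upwards [ae_capProb_inner_ne_zero hθ hv hv0, ae_mem_capSphere] with ξ hξ0 hξ
  exact (abs_pos.2 (div_ne_zero hξ0 (ell_pos hθ hξ).ne')).trans_le
    (abs_inner_div_ell_le_capSupp hθ hK hv hadd hsub hξ)

lemma integrable_log_capSupp (hθ : θ ∈ Ioo 0 π) (hK : IsCompact K)
    (hflat : (K ∩ hyperplane n).Nontrivial)
    (hx : x ∈ intrinsicInterior ℝ (K ∩ hyperplane n)) :
    Integrable (fun ξ ↦ log (capSupp n θ K x ξ)) (capProb n θ) := by
  obtain ⟨v, hv, hv0, hadd, hsub⟩ := exists_horizontal_add_sub_mem hflat hx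
  have hu := integrable_capSupp hθ hK x
  refine integrable_of_le_of_le hu.1.aemeasurable.log.aestronglyMeasurable ?_ ?_
    (integrable_log_inner_div_ell hθ hv hv0) hu
  · filter_upwards [ae_capProb_inner_ne_zero hθ hv hv0, ae_mem_capSphere] with ξ hξ0 hξ
    rw [← log_abs]
    exact log_le_log (abs_pos.2 (div_ne_zero hξ0 (ell_pos hθ hξ).ne'))
      (abs_inner_div_ell_le_capSupp hθ hK hv hadd hsub hξ)
  · filter_upwards [ae_capSupp_pos hθ hK hflat hx] with ξ hξ
    exact log_le_self hξ.le

lemma bddAbove_entropyAt_image (hθ : θ ∈ Ioo 0 π) (hK : IsCompact K)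
    (hflat : (K ∩ hyperplane n).Nontrivial) :
    BddAbove (entropyAt n θ K '' intrinsicInterior ℝ (K ∩ hyperplane n)) := by
  refine ⟨∫ ξ, Metric.diam K / ell n θ ξ ∂capProb n θ, forall_mem_image.2 fun x hx ↦ ?_⟩
  have hdiam : Integrable (fun ξ ↦ Metric.diam K / ell n θ ξ) (capProb n θ) :=
    integrable_capProb_of_integrableOn (integrableOn_capSphere_of_continuousOn hθ
      (continuousOn_const.div continuous_ell.continuousOn fun ξ hξ ↦ (ell_pos hθ hξ).ne'))
  rw [entropyAt_eq_integral_capProb hθ]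
  refine integral_mono_ae (integrable_log_capSupp hθ hK hflat hx) hdiam ?_
  filter_upwards [ae_capSupp_pos hθ hK hflat hx, ae_mem_capSphere] with ξ hpos hξ
  calc log (capSupp n θ K x ξ) ≤ capSupp n θ K x ξ := log_le_self hpos.le
    _ ≤ Metric.diam K / ell n θ ξ := div_le_div_of_nonneg_right
        (suppFn_le_diam hK (intrinsicInterior_subset hx).1 hξ) (ell_pos hθ hξ).le

lemma entropyAt_add_exp_le_entropyAt_midpoint (hθ : θ ∈ Ioo 0 π) (hK : IsCompact K)
    (hKc : Convex ℝ K) (hz : z ∈ intrinsicInterior ℝ (K ∩ hyperplane n))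
    (hw : w ∈ intrinsicInterior ℝ (K ∩ hyperplane n)) (hzw : z ≠ w) :
    (entropyAt n θ K z + entropyAt n θ K w) / 2 +
        exp (2 * (log ‖z - w‖ + capLogMean n θ - entropyAt n θ K (midpoint ℝ z w))) / 8 ≤
      entropyAt n θ K (midpoint ℝ z w) := by
  have hzK := intrinsicInterior_subset hz
  have hwK := intrinsicInterior_subset hw
  have hflat : (K ∩ hyperplane n).Nontrivial := ⟨z, hzK, w, hwK, hzw⟩
  have hm := (convex_flat_intrinsicInterior hKc).midpoint_mem hz hw
  have hdir : w - z ∈ hyperplane n := (hyperplaneSubmodule n).sub_mem hwK.2 hzK.2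
  have hdir0 : w - z ≠ 0 := sub_ne_zero.2 hzw.symm
  have hne : K.Nonempty := ⟨z, hzK.1⟩
  have hsub (ξ : Amb n) :
      capSupp n θ K z ξ - capSupp n θ K w ξ = ⟪ξ, w - z⟫ / ell n θ ξ :=
    sub_eq_of_eq_add' (capSupp_eq_add_inner_div_ell hK hne hdir ξ)
  have hsubne : ∀ᵐ ξ ∂capProb n θ, capSupp n θ K z ξ ≠ capSupp n θ K w ξ := by
    filter_upwards [ae_capProb_inner_ne_zero hθ hdir hdir0, ae_mem_capSphere] with ξ hξ0 hξ
    rw [← sub_ne_zero, hsub]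
    exact div_ne_zero hξ0 (ell_pos hθ hξ).ne'
  have hlogm := integrable_log_capSupp hθ hK hflat hm
  have hlogsub := integrable_log_inner_div_ell hθ hdir hdir0
  simp only [capSupp_midpoint hK hne] at hlogm
  simp only [← hsub] at hlogsub
  have := isProbabilityMeasure_capProb (n := n) hθ
  have hmid := integral_log_add_exp_le_integral_log_midpoint (ae_capSupp_pos hθ hK hflat hz)
    (ae_capSupp_pos hθ hK hflat hw) hsubne (integrable_log_capSupp hθ hK hflat hz)
    (integrable_log_capSupp hθ hK hflat hw) hlogm hlogsub
  simp only [hsub, ← capSupp_midpoint hK hne, integral_log_inner_div_ell hθ hdir hdir0,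
    ← entropyAt_eq_integral_capProb hθ, norm_sub_rev w z] at hmid
  exact hmid

end Entropy

end Cap

theorem stmt_14_general (n : ℕ) (hn : 1 ≤ n) (θ : ℝ) (hθ : θ ∈ Set.Ioo 0 π) :
    ∃ D : ℝ, 0 < D ∧
      ∀ K : Set (Amb n), IsCompact K → Convex ℝ K →
        ∀ ze ∈ intrinsicInterior ℝ (K ∩ hyperplane n),
          entropyAt n θ K ze = capEntropy n θ K →
          ∀ z ∈ intrinsicInterior ℝ (K ∩ hyperplane n),
            entropyAt n θ K z ≤
              capEntropy n θ K -
                D * Real.exp (-2 * capEntropy n θ K) * ‖z - ze‖ ^ 2 := by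
  have : NeZero n := ⟨by lia⟩
  refine ⟨exp (2 * capLogMean n θ) / 4, by positivity, fun K hK hKc ze hze hmax z hz ↦ ?_⟩
  rcases eq_or_ne z ze with rfl | hne
  · simp [hmax]
  have hflat : (K ∩ hyperplane n).Nontrivial :=
    ⟨z, intrinsicInterior_subset hz, ze, intrinsicInterior_subset hze, hne⟩
  have hmid_le : entropyAt n θ K (midpoint ℝ z ze) ≤ capEntropy n θ K :=
    le_csSup (bddAbove_entropyAt_image hθ hK hflat)
      (mem_image_of_mem _ ((convex_flat_intrinsicInterior hKc).midpoint_mem hz hze))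
  have hmid := entropyAt_add_exp_le_entropyAt_midpoint hθ hK hKc hz hze hne
  have hexp : exp (2 * capLogMean n θ) * exp (-2 * capEntropy n θ K) * ‖z - ze‖ ^ 2 ≤
      exp (2 * (log ‖z - ze‖ + capLogMean n θ - entropyAt n θ K (midpoint ℝ z ze))) := by
    rw [← exp_log (norm_sub_pos_iff.2 hne), ← exp_nat_mul, ← exp_add, ← exp_add, log_exp]
    refine exp_le_exp.2 ?_
    push_cast
    linarith
  rw [hmax] at hmid
  linarith

/-- there is `D > 0` depending only on `n` and `θ` such that for every
`θ`-capillary convex body with capillary entropy point `z_e` and every `z` in the relative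
interior of `K_f`, `ℰ_θ(K, z) ≤ ℰ_θ(K) - D e^{-2 ℰ_θ(K)} |z - z_e|²`. -/
theorem stmt_14 (n : ℕ) (hn : 1 ≤ n) (θ : ℝ) (hθ : θ ∈ Set.Ioo 0 (π / 2)) :
    ∃ D : ℝ, 0 < D ∧
      ∀ K : Set (Amb n), IsThetaCapillary n θ K →
        ∀ ze ∈ intrinsicInterior ℝ (K ∩ hyperplane n),
          entropyAt n θ K ze = capEntropy n θ K →
          ∀ z ∈ intrinsicInterior ℝ (K ∩ hyperplane n),
            entropyAt n θ K z ≤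
              capEntropy n θ K -
                D * Real.exp (-2 * capEntropy n θ K) * ‖z - ze‖ ^ 2 := by
  obtain ⟨D, hD, h⟩ := stmt_14_general n hn θ ⟨hθ.1, hθ.2.trans (half_lt_self pi_pos)⟩
  exact ⟨D, hD, fun K hK ↦ h K hK.1.compact hK.1.convex⟩

end
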